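/- Additivity on tensor products: let P and Q be bipartite non-signaling devices over finite sets A1, B1, X1, Y1 and A2, B2, X2, Y2 respectively, and define their tensor product (P ox Q)(a1,a2,b1,b2|x1,x2,y1,y2) := P(a1,b1|x1,y1) * Q(a2,b2|x2,y2). Then P ox Q is a fully non-signaling four-partite device and N_sq(P ox Q) = N_sq(P) + N_sq(Q). -/

import Mathlib

/-- Shannon entropy (base-2) of a finitely supported real-valued distribution. -/
noncomputable def shannonEnt {α : Type} [Fintype α] (p : α → ℝ) : ℝ :=
  -∑ a, p a * Real.logb 2 (p a)

/-- Shannon mutual information (base-2) of a joint distribution on `α × β`. -/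
noncomputable def mutInfo {α β : Type} [Fintype α] [Fintype β] (R : α → β → ℝ) : ℝ :=
  shannonEnt (fun a => ∑ b, R a b) + shannonEnt (fun b => ∑ a, R a b) -
    shannonEnt (fun p : α × β => R p.1 p.2)

/-- A bipartite non-signaling device over finite output sets `A`, `B` and input
sets `X`, `Y`. -/
def IsDevice {A B X Y : Type} [Fintype A] [Fintype B] (P : A → B → X → Y → ℝ) : Prop :=
  (∀ a b x y, 0 ≤ P a b x y) ∧
  (∀ x y, ∑ a, ∑ b, P a b x y = 1) ∧
  (∀ a x y y', ∑ b, P a b x y = ∑ b, P a b x y') ∧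
  (∀ b y x x', ∑ a, P a b x y = ∑ a, P a b x' y)

/-- The set of values `∑_e p_e · I(A:B)_{P_e(·,·|x,y)}` over all (finite) ensembles
`{(p_e, P_e)}` of the device `P` into non-signaling devices. -/
def NsqSet {A B X Y : Type} [Fintype A] [Fintype B]
    (P : A → B → X → Y → ℝ) (x : X) (y : Y) : Set ℝ :=
  { r | ∃ (n : ℕ) (p : Fin n → ℝ) (Pe : Fin n → A → B → X → Y → ℝ),
      (∀ i, 0 ≤ p i) ∧ (∑ i, p i = 1) ∧ (∀ i, IsDevice (Pe i)) ∧
      (∀ a b x' y', ∑ i, p i * Pe i a b x' y' = P a b x' y') ∧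
      r = ∑ i, p i * mutInfo (fun a b => Pe i a b x y) }

/-- The squashed non-locality of a bipartite device: the maximum over inputs `(x,y)` of
the infimum over ensembles of the averaged mutual information at fixed inputs. -/
noncomputable def Nsq {A B X Y : Type} [Fintype A] [Fintype B] [Fintype X] [Fintype Y]
    [Nonempty X] [Nonempty Y] (P : A → B → X → Y → ℝ) : ℝ :=
  Finset.univ.sup' Finset.univ_nonempty (fun xy : X × Y => sInf (NsqSet P xy.1 xy.2))

/-- A local device, i.e. one admitting a local hidden variable model. -/
def IsLocalDevice {A B X Y : Type} [Fintype A] [Fintype B] (P : A → B → X → Y → ℝ) : Prop :=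
  ∃ (n : ℕ) (mu : Fin n → ℝ) (LA : A → X → Fin n → ℝ) (LB : B → Y → Fin n → ℝ),
    (∀ i, 0 ≤ mu i) ∧ (∑ i, mu i = 1) ∧
    (∀ a x i, 0 ≤ LA a x i) ∧ (∀ x i, ∑ a, LA a x i = 1) ∧
    (∀ b y i, 0 ≤ LB b y i) ∧ (∀ y i, ∑ b, LB b y i = 1) ∧
    (∀ a b x y, P a b x y = ∑ i, mu i * LA a x i * LB b y i)

/-- A fully non-signaling four-partite device over output sets `A1, A2, B1, B2` and
input sets `X1, X2, Y1, Y2`: nonnegative, normalized, and no single subsystem can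
signal to the rest (equivalently, no subset of subsystems can signal to the
complementary ones). -/
def IsDevice4 {A1 A2 B1 B2 X1 X2 Y1 Y2 : Type}
    [Fintype A1] [Fintype A2] [Fintype B1] [Fintype B2]
    (P : A1 → A2 → B1 → B2 → X1 → X2 → Y1 → Y2 → ℝ) : Prop :=
  (∀ a1 a2 b1 b2 x1 x2 y1 y2, 0 ≤ P a1 a2 b1 b2 x1 x2 y1 y2) ∧
  (∀ x1 x2 y1 y2, ∑ a1, ∑ a2, ∑ b1, ∑ b2, P a1 a2 b1 b2 x1 x2 y1 y2 = 1) ∧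
  (∀ a2 b1 b2 x2 y1 y2 x1 x1',
    ∑ a1, P a1 a2 b1 b2 x1 x2 y1 y2 = ∑ a1, P a1 a2 b1 b2 x1' x2 y1 y2) ∧
  (∀ a1 b1 b2 x1 y1 y2 x2 x2',
    ∑ a2, P a1 a2 b1 b2 x1 x2 y1 y2 = ∑ a2, P a1 a2 b1 b2 x1 x2' y1 y2) ∧
  (∀ a1 a2 b2 x1 x2 y2 y1 y1',
    ∑ b1, P a1 a2 b1 b2 x1 x2 y1 y2 = ∑ b1, P a1 a2 b1 b2 x1 x2 y1' y2) ∧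
  (∀ a1 a2 b1 x1 x2 y1 y2 y2',
    ∑ b2, P a1 a2 b1 b2 x1 x2 y1 y2 = ∑ b2, P a1 a2 b1 b2 x1 x2 y1 y2')

/-- The set of values `∑_e p_e · I(A1A2:B1B2)` over all ensembles of a four-partite
device into fully non-signaling four-partite devices, at fixed inputs. -/
def Nsq4Set {A1 A2 B1 B2 X1 X2 Y1 Y2 : Type}
    [Fintype A1] [Fintype A2] [Fintype B1] [Fintype B2]
    (P : A1 → A2 → B1 → B2 → X1 → X2 → Y1 → Y2 → ℝ)
    (x1 : X1) (x2 : X2) (y1 : Y1) (y2 : Y2) : Set ℝ :=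
  { r | ∃ (n : ℕ) (p : Fin n → ℝ) (Pe : Fin n → A1 → A2 → B1 → B2 → X1 → X2 → Y1 → Y2 → ℝ),
      (∀ i, 0 ≤ p i) ∧ (∑ i, p i = 1) ∧ (∀ i, IsDevice4 (Pe i)) ∧
      (∀ a1 a2 b1 b2 x1' x2' y1' y2',
        ∑ i, p i * Pe i a1 a2 b1 b2 x1' x2' y1' y2' = P a1 a2 b1 b2 x1' x2' y1' y2') ∧
      r = ∑ i, p i * mutInfo (fun (a : A1 × A2) (b : B1 × B2) =>
            Pe i a.1 a.2 b.1 b.2 x1 x2 y1 y2) }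

/-- The squashed non-locality of a four-partite device with respect to the bipartition
Alice = (A1,A2,X1,X2), Bob = (B1,B2,Y1,Y2). -/
noncomputable def Nsq4 {A1 A2 B1 B2 X1 X2 Y1 Y2 : Type}
    [Fintype A1] [Fintype A2] [Fintype B1] [Fintype B2]
    [Fintype X1] [Fintype X2] [Fintype Y1] [Fintype Y2]
    [Nonempty X1] [Nonempty X2] [Nonempty Y1] [Nonempty Y2]
    (P : A1 → A2 → B1 → B2 → X1 → X2 → Y1 → Y2 → ℝ) : ℝ :=
  Finset.univ.sup' Finset.univ_nonempty
    (fun t : (X1 × X2) × (Y1 × Y2) => sInf (Nsq4Set P t.1.1 t.1.2 t.2.1 t.2.2))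


open Real in
/-- Unnormalised mutual information in nats. -/
noncomputable def MI {α β : Type} [Fintype α] [Fintype β] (R : α → β → ℝ) : ℝ :=
  ∑ a, negMulLog (∑ b, R a b) + ∑ b, negMulLog (∑ a, R a b) - ∑ a, ∑ b, negMulLog (R a b)

open Real

lemma shannonEnt_eq {α : Type} [Fintype α] (p : α → ℝ) :
    shannonEnt p = (∑ a, negMulLog (p a)) / log 2 := by
  simp only [shannonEnt, negMulLog, logb, Finset.sum_div, ← Finset.sum_neg_distrib]
  refine Finset.sum_congr rfl fun a _ => ?_
  ring

lemma mutInfo_eq {α β : Type} [Fintype α] [Fintype β] (R : α → β → ℝ) :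
    mutInfo R = MI R / log 2 := by
  simp only [mutInfo, MI, shannonEnt_eq, Fintype.sum_prod_type]
  ring

lemma core_term {f r s t : ℝ} (hf : 0 ≤ f) (hr : f ≤ r) (hs : f ≤ s) (ht : r ≤ t) :
    f * (log r + log s - log f - log t) ≤ r * s / t - f := by
  rcases hf.eq_or_lt with h | h
  · subst h
    have : 0 ≤ r * s / t := div_nonneg (mul_nonneg hr hs) (hr.trans ht)
    simpa using this
  · have r0 : 0 < r := h.trans_le hr
    have s0 : 0 < s := h.trans_le hs
    have t0 : 0 < t := r0.trans_le ht
    have h1 : log (r * s / (f * t)) = log r + log s - log f - log t := by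
      rw [log_div (by positivity) (by positivity), log_mul (by positivity) (by positivity),
        log_mul (by positivity) (by positivity)]
      ring
    rw [← h1]
    have h2 := log_le_sub_one_of_pos (show 0 < r * s / (f * t) by positivity)
    calc _ ≤ f * (r * s / (f * t) - 1) := mul_le_mul_of_nonneg_left h2 hf
      _ = _ := by field_simp

lemma core {X Y : Type} [Fintype X] [Fintype Y] (f : X → Y → ℝ) (hf : ∀ x y, 0 ≤ f x y) :
    ∑ x, ∑ y, negMulLog (f x y) + negMulLog (∑ x, ∑ y, f x y) ≤
      ∑ x, negMulLog (∑ y, f x y) + ∑ y, negMulLog (∑ x, f x y) := by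
  set r : X → ℝ := fun x => ∑ y, f x y with hr
  set s : Y → ℝ := fun y => ∑ x, f x y with hs
  set t : ℝ := ∑ x, r x with ht
  have hts : ∑ y, s y = t := by rw [ht, hr, hs]; exact Finset.sum_comm
  have r0 : ∀ x, 0 ≤ r x := fun x => Finset.sum_nonneg fun y _ => hf x y
  have key : ∑ x, ∑ y, f x y * (log (r x) + log (s y) - log (f x y) - log t) ≤
      ∑ x, ∑ y, (r x * s y / t - f x y) := by
    refine Finset.sum_le_sum fun x _ => Finset.sum_le_sum fun y _ => ?_
    refine core_term (hf x y) ?_ ?_ ?_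
    · exact Finset.single_le_sum (f := fun y => f x y) (fun y _ => hf x y) (Finset.mem_univ y)
    · exact Finset.single_le_sum (f := fun x => f x y) (fun x _ => hf x y) (Finset.mem_univ x)
    · exact Finset.single_le_sum (f := r) (fun x _ => r0 x) (Finset.mem_univ x)
  have e1 : ∑ x, ∑ y, (r x * s y / t - f x y) = 0 := by
    have : ∑ x, ∑ y, r x * s y / t = t * t / t := by
      simp only [← Finset.sum_div, ← Finset.mul_sum, ← Finset.sum_mul, hts]
      rw [← ht]
    simp only [Finset.sum_sub_distrib]
    rw [this, mul_self_div_self, ht, sub_self]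
  have e2 : ∑ x, ∑ y, f x y * (log (r x) + log (s y) - log (f x y) - log t) =
      -∑ x, negMulLog (r x) - ∑ y, negMulLog (s y) + ∑ x, ∑ y, negMulLog (f x y)
        + negMulLog t := by
    have a1 : ∑ x, ∑ y, f x y * log (r x) = -∑ x, negMulLog (r x) := by
      simp only [← Finset.sum_mul, negMulLog, ← Finset.sum_neg_distrib]
      refine Finset.sum_congr rfl fun x _ => ?_
      simp [hr]
    have a2 : ∑ x, ∑ y, f x y * log (s y) = -∑ y, negMulLog (s y) := by
      rw [Finset.sum_comm]
      simp only [← Finset.sum_mul, negMulLog, ← Finset.sum_neg_distrib]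
      refine Finset.sum_congr rfl fun x _ => ?_
      simp [hs]
    have a3 : ∑ x, ∑ y, f x y * log t = - negMulLog t := by
      simp only [← Finset.sum_mul, negMulLog]
      rw [ht]; simp [hr]
    simp only [mul_add, mul_sub, Finset.sum_add_distrib, Finset.sum_sub_distrib, a1, a2, a3]
    simp only [negMulLog, Finset.sum_neg_distrib, neg_mul]
    ring
  rw [e1, e2] at key
  linarith

lemma MI_nonneg {X Y : Type} [Fintype X] [Fintype Y] (f : X → Y → ℝ) (hf : ∀ x y, 0 ≤ f x y)
    (h1 : ∑ x, ∑ y, f x y = 1) : 0 ≤ MI f := by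
  have := core f hf
  rw [h1] at this
  simp only [negMulLog_one] at this
  unfold MI
  linarith

lemma mutInfo_nonneg {X Y : Type} [Fintype X] [Fintype Y] (f : X → Y → ℝ)
    (hf : ∀ x y, 0 ≤ f x y) (h1 : ∑ x, ∑ y, f x y = 1) : 0 ≤ mutInfo f := by
  rw [mutInfo_eq]
  exact div_nonneg (MI_nonneg f hf h1) (log_nonneg (by norm_num))

lemma ssa {X Y Z : Type} [Fintype X] [Fintype Y] [Fintype Z] (f : Z → X → Y → ℝ)
    (hf : ∀ z x y, 0 ≤ f z x y) :
    ∑ z, ∑ x, ∑ y, negMulLog (f z x y) + ∑ z, negMulLog (∑ x, ∑ y, f z x y) ≤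
      ∑ z, ∑ x, negMulLog (∑ y, f z x y) + ∑ z, ∑ y, negMulLog (∑ x, f z x y) := by
  rw [← Finset.sum_add_distrib, ← Finset.sum_add_distrib]
  exact Finset.sum_le_sum fun z _ => core (f z) (hf z)

/-- Chain-rule inequality. -/
lemma MI_chain {A1 A2 B1 B2 : Type} [Fintype A1] [Fintype A2] [Fintype B1] [Fintype B2]
    (R : A1 → A2 → B1 → B2 → ℝ) (hR : ∀ a1 a2 b1 b2, 0 ≤ R a1 a2 b1 b2) :
    MI (fun a1 b1 => ∑ a2, ∑ b2, R a1 a2 b1 b2) +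
      ∑ a1, (MI (fun a2 b2 => ∑ b1, R a1 a2 b1 b2) -
        negMulLog (∑ a2, ∑ b2, ∑ b1, R a1 a2 b1 b2)) ≤
    MI (fun (a : A1 × A2) (b : B1 × B2) => R a.1 a.2 b.1 b.2) := by
  have s1 := ssa (fun (z : A1 × B2) (a2 : A2) (b1 : B1) => R z.1 a2 b1 z.2)
    (fun _ _ _ => hR _ _ _ _)
  have s2 := ssa (fun (b1 : B1) (a1 : A1) (b2 : B2) => ∑ a2, R a1 a2 b1 b2)
    (fun _ _ _ => Finset.sum_nonneg fun _ _ => hR _ _ _ _)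
  simp only [MI, Fintype.sum_prod_type, Finset.sum_add_distrib, Finset.sum_sub_distrib] at *
  -- full
  have e1 : ∑ a1, ∑ b2, ∑ a2, ∑ b1, negMulLog (R a1 a2 b1 b2) =
      ∑ a1, ∑ a2, ∑ b1, ∑ b2, negMulLog (R a1 a2 b1 b2) := by
    refine Finset.sum_congr rfl fun a1 _ => ?_
    rw [Finset.sum_comm]
    exact Finset.sum_congr rfl fun a2 _ => Finset.sum_comm
  -- A1 B2
  have e2 : ∑ a1, ∑ b2, negMulLog (∑ a2, ∑ b1, R a1 a2 b1 b2) =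
      ∑ a1, ∑ b2, negMulLog (∑ a2, ∑ b1, R a1 a2 b1 b2) := rfl
  -- A1 A2 B2
  have e3 : ∑ a1, ∑ b2, ∑ a2, negMulLog (∑ b1, R a1 a2 b1 b2) =
      ∑ a1, ∑ a2, ∑ b2, negMulLog (∑ b1, R a1 a2 b1 b2) :=
    Finset.sum_congr rfl fun a1 _ => Finset.sum_comm
  -- A1 B1 B2
  have e4 : ∑ a1, ∑ b2, ∑ b1, negMulLog (∑ a2, R a1 a2 b1 b2) =
      ∑ b1, ∑ a1, ∑ b2, negMulLog (∑ a2, R a1 a2 b1 b2) := by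
    rw [Finset.sum_comm]
    rw [Finset.sum_comm]
    rw [Finset.sum_comm (s := (Finset.univ : Finset B1))]
    exact Finset.sum_congr rfl fun a1 _ => Finset.sum_comm
  -- B1
  have e5 : ∀ b1, ∑ a1, ∑ b2, ∑ a2, R a1 a2 b1 b2 = ∑ a1, ∑ a2, ∑ b2, R a1 a2 b1 b2 :=
    fun b1 => Finset.sum_congr rfl fun a1 _ => Finset.sum_comm
  -- A1 B1
  have e6 : ∑ b1, ∑ a1, negMulLog (∑ b2, ∑ a2, R a1 a2 b1 b2) =
      ∑ a1, ∑ b1, negMulLog (∑ a2, ∑ b2, R a1 a2 b1 b2) := by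
    rw [Finset.sum_comm]
    refine Finset.sum_congr rfl fun a1 _ => Finset.sum_congr rfl fun b1 _ => ?_
    rw [Finset.sum_comm]
  -- A1 A2
  have e7 : ∀ a1 a2, ∑ b2, ∑ b1, R a1 a2 b1 b2 = ∑ b1, ∑ b2, R a1 a2 b1 b2 :=
    fun a1 a2 => Finset.sum_comm
  -- A1
  have e8 : ∀ a1, ∑ b1, ∑ a2, ∑ b2, R a1 a2 b1 b2 = ∑ a2, ∑ b1, ∑ b2, R a1 a2 b1 b2 :=
    fun a1 => Finset.sum_comm
  rw [e1, e3, e4] at s1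
  simp only [e5] at s2
  rw [e6] at s2
  simp only [e7, e8]
  linarith

lemma MI_smul {α β : Type} [Fintype α] [Fintype β] (R : α → β → ℝ) (w : ℝ)
    (h1 : ∑ a, ∑ b, R a b = 1) :
    MI (fun a b => w * R a b) = w * MI R + negMulLog w := by
  have h2 : ∑ b, ∑ a, R a b = 1 := by rw [Finset.sum_comm, h1]
  simp only [MI, ← Finset.mul_sum, negMulLog_mul, Finset.sum_add_distrib, ← Finset.sum_mul, h1, h2]
  ring

lemma mutInfo_prod {A1 A2 B1 B2 : Type} [Fintype A1] [Fintype A2] [Fintype B1] [Fintype B2]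
    (R : A1 → B1 → ℝ) (S : A2 → B2 → ℝ)
    (hR : ∑ a, ∑ b, R a b = 1) (hS : ∑ a, ∑ b, S a b = 1) :
    mutInfo (fun (a : A1 × A2) (b : B1 × B2) => R a.1 b.1 * S a.2 b.2) =
      mutInfo R + mutInfo S := by
  have hR' : ∑ b, ∑ a, R a b = 1 := by rw [Finset.sum_comm, hR]
  have hS' : ∑ b, ∑ a, S a b = 1 := by rw [Finset.sum_comm, hS]
  rw [mutInfo_eq, mutInfo_eq, mutInfo_eq, ← add_div]
  congr 1
  simp only [MI, Fintype.sum_prod_type]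
  simp only [← Finset.mul_sum, ← Finset.sum_mul, negMulLog_mul, Finset.sum_add_distrib,
    hR, hS, hR', hS']
  ring

lemma mem_NsqSet {A B X Y ι : Type} [Fintype A] [Fintype B] [Fintype ι]
    (P : A → B → X → Y → ℝ) (x : X) (y : Y) (p : ι → ℝ) (Pe : ι → A → B → X → Y → ℝ)
    (h0 : ∀ i, 0 ≤ p i) (h1 : ∑ i, p i = 1) (hd : ∀ i, IsDevice (Pe i))
    (hm : ∀ a b x' y', ∑ i, p i * Pe i a b x' y' = P a b x' y') :
    ∑ i, p i * mutInfo (fun a b => Pe i a b x y) ∈ NsqSet P x y := by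
  let e := (Fintype.equivFin ι).symm
  refine ⟨Fintype.card ι, fun i => p (e i), fun i => Pe (e i), fun i => h0 _, ?_, fun i => hd _,
    ?_, ?_⟩
  · rw [← h1]; exact e.sum_comp p
  · intro a b x' y'
    rw [← hm]; exact e.sum_comp (fun i => p i * Pe i a b x' y')
  · exact (e.sum_comp (fun i => p i * mutInfo (fun a b => Pe i a b x y))).symm

lemma mem_Nsq4Set {A1 A2 B1 B2 X1 X2 Y1 Y2 ι : Type}
    [Fintype A1] [Fintype A2] [Fintype B1] [Fintype B2] [Fintype ι]
    (P : A1 → A2 → B1 → B2 → X1 → X2 → Y1 → Y2 → ℝ)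
    (x1 : X1) (x2 : X2) (y1 : Y1) (y2 : Y2) (p : ι → ℝ)
    (Pe : ι → A1 → A2 → B1 → B2 → X1 → X2 → Y1 → Y2 → ℝ)
    (h0 : ∀ i, 0 ≤ p i) (h1 : ∑ i, p i = 1) (hd : ∀ i, IsDevice4 (Pe i))
    (hm : ∀ a1 a2 b1 b2 x1' x2' y1' y2',
        ∑ i, p i * Pe i a1 a2 b1 b2 x1' x2' y1' y2' = P a1 a2 b1 b2 x1' x2' y1' y2') :
    ∑ i, p i * mutInfo (fun (a : A1 × A2) (b : B1 × B2) =>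
            Pe i a.1 a.2 b.1 b.2 x1 x2 y1 y2) ∈ Nsq4Set P x1 x2 y1 y2 := by
  let e := (Fintype.equivFin ι).symm
  refine ⟨Fintype.card ι, fun i => p (e i), fun i => Pe (e i), fun i => h0 _, ?_, fun i => hd _,
    ?_, ?_⟩
  · rw [← h1]; exact e.sum_comp p
  · intro a1 a2 b1 b2 x1' x2' y1' y2'
    rw [← hm]; exact e.sum_comp (fun i => p i * Pe i a1 a2 b1 b2 x1' x2' y1' y2')
  · exact (e.sum_comp (fun i => p i * mutInfo (fun (a : A1 × A2) (b : B1 × B2) =>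
            Pe i a.1 a.2 b.1 b.2 x1 x2 y1 y2))).symm

lemma NsqSet_nonempty {A B X Y : Type} [Fintype A] [Fintype B]
    (P : A → B → X → Y → ℝ) (hP : IsDevice P) (x : X) (y : Y) : (NsqSet P x y).Nonempty :=
  ⟨_, mem_NsqSet P x y (fun _ : Unit => 1) (fun _ => P) (by simp) (by simp) (fun _ => hP)
    (by simp)⟩

lemma NsqSet_nonneg {A B X Y : Type} [Fintype A] [Fintype B]
    (P : A → B → X → Y → ℝ) (x : X) (y : Y) : ∀ r ∈ NsqSet P x y, 0 ≤ r := by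
  rintro r ⟨n, p, Pe, h0, h1, hd, hm, rfl⟩
  refine Finset.sum_nonneg fun i _ => mul_nonneg (h0 i) ?_
  exact mutInfo_nonneg _ (fun a b => (hd i).1 a b x y) ((hd i).2.1 x y)

lemma NsqSet_bdd {A B X Y : Type} [Fintype A] [Fintype B]
    (P : A → B → X → Y → ℝ) (x : X) (y : Y) : BddBelow (NsqSet P x y) :=
  ⟨0, fun r hr => NsqSet_nonneg P x y r hr⟩

lemma tensor_device {A1 A2 B1 B2 X1 X2 Y1 Y2 : Type}
    [Fintype A1] [Fintype A2] [Fintype B1] [Fintype B2]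
    (P : A1 → B1 → X1 → Y1 → ℝ) (hP : IsDevice P)
    (Q : A2 → B2 → X2 → Y2 → ℝ) (hQ : IsDevice Q) :
    IsDevice4 (fun a1 a2 b1 b2 x1 x2 y1 y2 => P a1 b1 x1 y1 * Q a2 b2 x2 y2) := by
  obtain ⟨p0, p1, p2, p3⟩ := hP
  obtain ⟨q0, q1, q2, q3⟩ := hQ
  refine ⟨fun _ _ _ _ _ _ _ _ => mul_nonneg (p0 _ _ _ _) (q0 _ _ _ _), ?_, ?_, ?_, ?_, ?_⟩
  · intro x1 x2 y1 y2
    simp only [← Finset.mul_sum, ← Finset.sum_mul, p1, q1, mul_one]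
  · intro a2 b1 b2 x2 y1 y2 x1 x1'
    simp only [← Finset.sum_mul]
    rw [p3 b1 y1 x1 x1']
  · intro a1 b1 b2 x1 y1 y2 x2 x2'
    simp only [← Finset.mul_sum]
    rw [q3 b2 y2 x2 x2']
  · intro a1 a2 b2 x1 x2 y2 y1 y1'
    simp only [← Finset.sum_mul]
    rw [p2 a1 x1 y1 y1']
  · intro a1 a2 b1 x1 x2 y1 y2 y2'
    simp only [← Finset.mul_sum]
    rw [q2 a2 x2 y2 y2']

/-- The marginal device on the first pair. -/
lemma marg_device {A1 A2 B1 B2 X1 X2 Y1 Y2 : Type}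
    [Fintype A1] [Fintype A2] [Fintype B1] [Fintype B2]
    (P : A1 → A2 → B1 → B2 → X1 → X2 → Y1 → Y2 → ℝ) (hP : IsDevice4 P) (x2 : X2) (y2 : Y2) :
    IsDevice (fun a1 b1 x1 y1 => ∑ a2, ∑ b2, P a1 a2 b1 b2 x1 x2 y1 y2) := by
  obtain ⟨p0, p1, pa1, pa2, pb1, pb2⟩ := hP
  refine ⟨fun _ _ _ _ => Finset.sum_nonneg fun _ _ => Finset.sum_nonneg fun _ _ =>
    p0 _ _ _ _ _ _ _ _, ?_, ?_, ?_⟩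
  · intro x1 y1
    rw [← p1 x1 x2 y1 y2]
    exact Finset.sum_congr rfl fun a1 _ => Finset.sum_comm
  · intro a1 x1 y1 y1'
    rw [Finset.sum_comm]
    rw [Finset.sum_comm (s := (Finset.univ : Finset B1))]
    refine Finset.sum_congr rfl fun a2 _ => ?_
    rw [Finset.sum_comm]
    rw [Finset.sum_comm (s := (Finset.univ : Finset B1))]
    exact Finset.sum_congr rfl fun b2 _ => pb1 _ _ _ _ _ _ _ _
  · intro b1 y1 x1 x1'
    rw [Finset.sum_comm]
    rw [Finset.sum_comm (s := (Finset.univ : Finset A1))]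
    refine Finset.sum_congr rfl fun a2 _ => ?_
    rw [Finset.sum_comm]
    rw [Finset.sum_comm (s := (Finset.univ : Finset A1))]
    exact Finset.sum_congr rfl fun b2 _ => pa1 _ _ _ _ _ _ _ _

/-- Normalising an unnormalised device. -/
lemma normalize_device {A B X Y : Type} [Fintype A] [Fintype B]
    (Q : A → B → X → Y → ℝ) (hQ : IsDevice Q)
    (G : A → B → X → Y → ℝ) (w : ℝ) (h0 : ∀ a b x y, 0 ≤ G a b x y)
    (hw : ∀ x y, ∑ a, ∑ b, G a b x y = w)
    (h2 : ∀ a x y y', ∑ b, G a b x y = ∑ b, G a b x y')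
    (h3 : ∀ b y x x', ∑ a, G a b x y = ∑ a, G a b x' y) :
    ∃ G' : A → B → X → Y → ℝ, IsDevice G' ∧ (∀ a b x y, w * G' a b x y = G a b x y) ∧
      ∀ x y, w * mutInfo (fun a b => G' a b x y) =
        (MI (fun a b => G a b x y) - negMulLog w) / log 2 := by
  have step : ∀ G' : A → B → X → Y → ℝ, IsDevice G' →
      (∀ a b x y, w * G' a b x y = G a b x y) →
      ∀ x y, w * mutInfo (fun a b => G' a b x y) =
        (MI (fun a b => G a b x y) - negMulLog w) / log 2 := by
    intro G' hd hG x y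
    have : (fun a b => G a b x y) = fun a b => w * G' a b x y := by
      funext a b; rw [hG]
    rw [this, MI_smul _ _ (hd.2.1 x y), mutInfo_eq]
    ring
  by_cases hw0 : w = 0
  · have hG : ∀ a b x y, w * Q a b x y = G a b x y := by
      intro a b x y
      have h := hw x y
      rw [hw0] at h ⊢
      rw [zero_mul]
      have h4 := (Finset.sum_eq_zero_iff_of_nonneg
        (fun a _ => Finset.sum_nonneg fun b _ => h0 a b x y)).1 h a (Finset.mem_univ a)
      exact ((Finset.sum_eq_zero_iff_of_nonneg
        (fun b _ => h0 a b x y)).1 h4 b (Finset.mem_univ b)).symm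
    exact ⟨Q, hQ, hG, step Q hQ hG⟩
  · have hd : IsDevice (fun a b x y => G a b x y / w) := by
      refine ⟨fun a b x y => div_nonneg (h0 a b x y) ?_, ?_, ?_, ?_⟩
      · rw [← hw x y]
        exact Finset.sum_nonneg fun a _ => Finset.sum_nonneg fun b _ => h0 a b x y
      · intro x y
        simp only [← Finset.sum_div, hw, div_self hw0]
      · intro a x y y'
        simp only [← Finset.sum_div]
        rw [h2 a x y y']
      · intro b y x x'
        simp only [← Finset.sum_div]
        rw [h3 b y x x']
    have hG : ∀ a b x y, w * (G a b x y / w) = G a b x y := fun a b x y => mul_div_cancel₀ _ hw0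
    exact ⟨_, hd, hG, step _ hd hG⟩

/-- The conditional device on the second pair, given the output `a1`. -/
lemma cond_device {A1 A2 B1 B2 X1 X2 Y1 Y2 : Type}
    [Fintype A1] [Fintype A2] [Fintype B1] [Fintype B2]
    (P : A1 → A2 → B1 → B2 → X1 → X2 → Y1 → Y2 → ℝ) (hP : IsDevice4 P)
    (Q : A2 → B2 → X2 → Y2 → ℝ) (hQ : IsDevice Q)
    (x1 : X1) (y1 : Y1) (x2 : X2) (y2 : Y2) (a1 : A1) :
    ∃ G' : A2 → B2 → X2 → Y2 → ℝ, IsDevice G' ∧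
      (∀ a b x y, (∑ a2, ∑ b2, ∑ b1, P a1 a2 b1 b2 x1 x2 y1 y2) * G' a b x y =
        ∑ b1, P a1 a b1 b x1 x y1 y) ∧
      ∀ x y, (∑ a2, ∑ b2, ∑ b1, P a1 a2 b1 b2 x1 x2 y1 y2) * mutInfo (fun a b => G' a b x y) =
        (MI (fun a b => ∑ b1, P a1 a b1 b x1 x y1 y) -
          negMulLog (∑ a2, ∑ b2, ∑ b1, P a1 a2 b1 b2 x1 x2 y1 y2)) / log 2 := by
  obtain ⟨p0, p1, pa1, pa2, pb1, pb2⟩ := hP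
  have h2 : ∀ a x y y', ∑ b, ∑ b1, P a1 a b1 b x1 x y1 y = ∑ b, ∑ b1, P a1 a b1 b x1 x y1 y' := by
    intro a x y y'
    rw [Finset.sum_comm]
    rw [Finset.sum_comm (s := (Finset.univ : Finset B2))]
    exact Finset.sum_congr rfl fun b1 _ => pb2 _ _ _ _ _ _ _ _
  have h3 : ∀ b y x x', ∑ a, ∑ b1, P a1 a b1 b x1 x y1 y = ∑ a, ∑ b1, P a1 a b1 b x1 x' y1 y := by
    intro b y x x'
    rw [Finset.sum_comm]
    rw [Finset.sum_comm (s := (Finset.univ : Finset A2))]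
    exact Finset.sum_congr rfl fun b1 _ => pa2 _ _ _ _ _ _ _ _
  refine normalize_device Q hQ (fun a b x y => ∑ b1, P a1 a b1 b x1 x y1 y) _
    (fun _ _ _ _ => Finset.sum_nonneg fun _ _ => p0 _ _ _ _ _ _ _ _) ?_ h2 h3
  intro x y
  calc ∑ a, ∑ b, ∑ b1, P a1 a b1 b x1 x y1 y
      = ∑ a, ∑ b, ∑ b1, P a1 a b1 b x1 x y1 y2 :=
        Finset.sum_congr rfl fun a _ => h2 a x y y2
    _ = ∑ b, ∑ a, ∑ b1, P a1 a b1 b x1 x y1 y2 := Finset.sum_comm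
    _ = ∑ b, ∑ a, ∑ b1, P a1 a b1 b x1 x2 y1 y2 :=
        Finset.sum_congr rfl fun b _ => h3 b y2 x x2
    _ = _ := Finset.sum_comm

lemma upper {A1 A2 B1 B2 X1 X2 Y1 Y2 : Type}
    [Fintype A1] [Fintype A2] [Fintype B1] [Fintype B2]
    (P : A1 → B1 → X1 → Y1 → ℝ)
    (Q : A2 → B2 → X2 → Y2 → ℝ) (x1 : X1) (x2 : X2) (y1 : Y1) (y2 : Y2)
    (r s : ℝ) (hr : r ∈ NsqSet P x1 y1) (hs : s ∈ NsqSet Q x2 y2) :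
    r + s ∈ Nsq4Set (fun a1 a2 b1 b2 x1 x2 y1 y2 => P a1 b1 x1 y1 * Q a2 b2 x2 y2)
      x1 x2 y1 y2 := by
  obtain ⟨n, p, Pe, p0, p1, pd, pm, rfl⟩ := hr
  obtain ⟨m, q, Qe, q0, q1, qd, qm, rfl⟩ := hs
  have := mem_Nsq4Set (fun a1 a2 b1 b2 x1 x2 y1 y2 => P a1 b1 x1 y1 * Q a2 b2 x2 y2)
    x1 x2 y1 y2 (fun i : Fin n × Fin m => p i.1 * q i.2)
    (fun i a1 a2 b1 b2 x1 x2 y1 y2 => Pe i.1 a1 b1 x1 y1 * Qe i.2 a2 b2 x2 y2)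
    (fun i => mul_nonneg (p0 _) (q0 _)) ?_ (fun i => tensor_device _ (pd _) _ (qd _)) ?_
  · convert this using 1
    have e : ∀ i : Fin n × Fin m, mutInfo (fun (a : A1 × A2) (b : B1 × B2) =>
        Pe i.1 a.1 b.1 x1 y1 * Qe i.2 a.2 b.2 x2 y2) =
        mutInfo (fun a b => Pe i.1 a b x1 y1) + mutInfo (fun a b => Qe i.2 a b x2 y2) :=
      fun i => mutInfo_prod (fun a b => Pe i.1 a b x1 y1) (fun a b => Qe i.2 a b x2 y2)
        ((pd _).2.1 _ _) ((qd _).2.1 _ _)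
    simp only [e]
    rw [Fintype.sum_prod_type]
    have e2 : ∀ i j, p i * q j * (mutInfo (fun a b => Pe i a b x1 y1) +
        mutInfo (fun a b => Qe j a b x2 y2)) =
        p i * mutInfo (fun a b => Pe i a b x1 y1) * q j +
        p i * (q j * mutInfo (fun a b => Qe j a b x2 y2)) := fun i j => by ring
    simp only [e2, Finset.sum_add_distrib, ← Finset.mul_sum, ← Finset.sum_mul, q1, p1, mul_one,
      one_mul]
  · rw [Fintype.sum_prod_type]
    simp only [← Finset.mul_sum, q1, mul_one, p1]
  · intro a1 a2 b1 b2 x1' x2' y1' y2'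
    rw [Fintype.sum_prod_type, ← pm, ← qm, Finset.sum_mul_sum]
    refine Finset.sum_congr rfl fun i _ => Finset.sum_congr rfl fun j _ => ?_
    ring

lemma lower {A1 A2 B1 B2 X1 X2 Y1 Y2 : Type}
    [Fintype A1] [Fintype A2] [Fintype B1] [Fintype B2]
    (P : A1 → B1 → X1 → Y1 → ℝ) (hP : IsDevice P)
    (Q : A2 → B2 → X2 → Y2 → ℝ) (hQ : IsDevice Q) (x1 : X1) (x2 : X2) (y1 : Y1) (y2 : Y2)
    (r : ℝ) (hr : r ∈ Nsq4Set
      (fun a1 a2 b1 b2 x1 x2 y1 y2 => P a1 b1 x1 y1 * Q a2 b2 x2 y2) x1 x2 y1 y2) :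
    ∃ s ∈ NsqSet P x1 y1, ∃ t ∈ NsqSet Q x2 y2, s + t ≤ r := by
  obtain ⟨n, p, Pe, p0, p1, pd, pm, rfl⟩ := hr
  have hs := mem_NsqSet P x1 y1 p (fun i a1 b1 x1 y1 => ∑ a2, ∑ b2, Pe i a1 a2 b1 b2 x1 x2 y1 y2)
    p0 p1 (fun i => marg_device _ (pd i) x2 y2) (by
      intro a b x' y'
      simp only [Finset.mul_sum]
      rw [Finset.sum_comm]
      simp only [Finset.sum_comm (s := (Finset.univ : Finset (Fin n)))]
      simp only [pm, ← Finset.mul_sum, hQ.2.1, mul_one])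
  choose G Gd Gm GI using fun (i : Fin n × A1) =>
    cond_device (Pe i.1) (pd i.1) Q hQ x1 y1 x2 y2 i.2
  have wt : ∀ i, ∑ a1, ∑ a2, ∑ b2, ∑ b1, Pe i a1 a2 b1 b2 x1 x2 y1 y2 = 1 := by
    intro i
    rw [← (pd i).2.1 x1 x2 y1 y2]
    exact Finset.sum_congr rfl fun _ _ => Finset.sum_congr rfl fun _ _ => Finset.sum_comm
  have ht := mem_NsqSet Q x2 y2 (fun i : Fin n × A1 =>
      p i.1 * ∑ a2, ∑ b2, ∑ b1, Pe i.1 i.2 a2 b1 b2 x1 x2 y1 y2) G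
    (fun i => mul_nonneg (p0 _) (Finset.sum_nonneg fun _ _ => Finset.sum_nonneg fun _ _ =>
      Finset.sum_nonneg fun _ _ => (pd i.1).1 _ _ _ _ _ _ _ _)) (by
      rw [Fintype.sum_prod_type]
      simp only [← Finset.mul_sum, wt, mul_one, p1]) Gd (by
      intro a b x' y'
      simp only [mul_assoc, Gm]
      rw [Fintype.sum_prod_type]
      simp only [Finset.mul_sum]
      rw [Finset.sum_comm]
      simp only [Finset.sum_comm (s := (Finset.univ : Finset (Fin n)))]
      simp only [pm, ← Finset.sum_mul, hP.2.1, one_mul])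
  refine ⟨_, hs, _, ht, ?_⟩
  simp only [mul_assoc, GI]
  rw [Fintype.sum_prod_type, ← Finset.sum_add_distrib]
  refine Finset.sum_le_sum fun i _ => ?_
  dsimp only
  rw [← Finset.mul_sum, ← mul_add]
  refine mul_le_mul_of_nonneg_left ?_ (p0 i)
  rw [mutInfo_eq, mutInfo_eq, ← Finset.sum_div, ← add_div]
  refine div_le_div_of_nonneg_right ?_ (log_nonneg (by norm_num))
  exact MI_chain (fun a1 a2 b1 b2 => Pe i a1 a2 b1 b2 x1 x2 y1 y2)
    (fun _ _ _ _ => (pd i).1 _ _ _ _ _ _ _ _)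

lemma sInf_NsqSet_tensor {A1 A2 B1 B2 X1 X2 Y1 Y2 : Type}
    [Fintype A1] [Fintype A2] [Fintype B1] [Fintype B2]
    (P : A1 → B1 → X1 → Y1 → ℝ) (hP : IsDevice P)
    (Q : A2 → B2 → X2 → Y2 → ℝ) (hQ : IsDevice Q) (x1 : X1) (x2 : X2) (y1 : Y1) (y2 : Y2) : sInf (Nsq4Set
      (fun a1 a2 b1 b2 x1 x2 y1 y2 => P a1 b1 x1 y1 * Q a2 b2 x2 y2) x1 x2 y1 y2) =
    sInf (NsqSet P x1 y1) + sInf (NsqSet Q x2 y2) := by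
  have lb : ∀ r ∈ Nsq4Set
      (fun a1 a2 b1 b2 x1 x2 y1 y2 => P a1 b1 x1 y1 * Q a2 b2 x2 y2) x1 x2 y1 y2,
      sInf (NsqSet P x1 y1) + sInf (NsqSet Q x2 y2) ≤ r := by
    intro r hr
    obtain ⟨s, hs, t, ht, h⟩ := lower P hP Q hQ x1 x2 y1 y2 r hr
    have := csInf_le (NsqSet_bdd P x1 y1) hs
    have := csInf_le (NsqSet_bdd Q x2 y2) ht
    linarith
  obtain ⟨r0, hr0⟩ := NsqSet_nonempty P hP x1 y1
  obtain ⟨s0, hs0⟩ := NsqSet_nonempty Q hQ x2 y2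
  apply le_antisymm
  · rw [← sub_le_iff_le_add]
    refine le_csInf ⟨r0, hr0⟩ fun r hr => ?_
    rw [sub_le_comm]
    refine le_csInf ⟨s0, hs0⟩ fun s hs => ?_
    rw [sub_le_iff_le_add']
    exact csInf_le ⟨_, lb⟩ (upper P Q x1 x2 y1 y2 r s hr hs)
  · exact le_csInf ⟨_, upper P Q x1 x2 y1 y2 r0 s0 hr0 hs0⟩ lb

/-- Additivity of the squashed non-locality on tensor products: the tensor product of two
bipartite non-signaling devices is a fully non-signaling four-partite device, and its
squashed non-locality is the sum of the squashed non-localities of the factors. -/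
theorem Nsq_additive_tensor {A1 A2 B1 B2 X1 X2 Y1 Y2 : Type}
    [Fintype A1] [Fintype A2] [Fintype B1] [Fintype B2]
    [Fintype X1] [Fintype X2] [Fintype Y1] [Fintype Y2]
    [Nonempty X1] [Nonempty X2] [Nonempty Y1] [Nonempty Y2]
    (P : A1 → B1 → X1 → Y1 → ℝ) (hP : IsDevice P)
    (Q : A2 → B2 → X2 → Y2 → ℝ) (hQ : IsDevice Q) :
    IsDevice4 (fun a1 a2 b1 b2 x1 x2 y1 y2 => P a1 b1 x1 y1 * Q a2 b2 x2 y2) ∧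
      Nsq4 (fun a1 a2 b1 b2 x1 x2 y1 y2 => P a1 b1 x1 y1 * Q a2 b2 x2 y2) =
        Nsq P + Nsq Q := by
  refine ⟨tensor_device P hP Q hQ, ?_⟩
  unfold Nsq4 Nsq
  simp only [sInf_NsqSet_tensor P hP Q hQ]
  apply le_antisymm
  · refine Finset.sup'_le _ _ fun t _ => ?_
    exact add_le_add
      (Finset.le_sup' (fun xy : X1 × Y1 => sInf (NsqSet P xy.1 xy.2))
        (Finset.mem_univ (t.1.1, t.2.1)))
      (Finset.le_sup' (fun xy : X2 × Y2 => sInf (NsqSet Q xy.1 xy.2))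
        (Finset.mem_univ (t.1.2, t.2.2)))
  · obtain ⟨u, -, hu⟩ := Finset.exists_mem_eq_sup' Finset.univ_nonempty
      (fun xy : X1 × Y1 => sInf (NsqSet P xy.1 xy.2))
    obtain ⟨v, -, hv⟩ := Finset.exists_mem_eq_sup' Finset.univ_nonempty
      (fun xy : X2 × Y2 => sInf (NsqSet Q xy.1 xy.2))
    rw [hu, hv]
    exact Finset.le_sup' (fun t : (X1 × X2) × (Y1 × Y2) =>
      sInf (NsqSet P t.1.1 t.2.1) + sInf (NsqSet Q t.1.2 t.2.2))
      (Finset.mem_univ ((u.1, v.1), (u.2, v.2)))
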